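/- Let X be a bi-Hilbertian A–B-bimodule with finite right numerical index λ, i.e., ‖Σᵢ {}_A⟨fᵢ, fᵢ⟩‖ ≤ λ‖Σᵢ Θ_{fᵢ,fᵢ}‖ for all finite families (fᵢ) in X. Then the map Υ on finite-rank operators defined by Υ(Θ_{e,f}) = {}_A⟨e, f⟩ extends to an A-bilinear positive map Υ : K(X_B) → A, and for any T ∈ K(X_B) commuting with the left action of A, Υ(T) lies in the center of M(A) (in particular Υ(Id) when defined is central). -/

import Mathlib

noncomputable section

open Filter Topology

universe u

/-- A bundled right Hilbert C*-module structure over a (possibly non-unital)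
C*-algebra `B` on a complete normed complex vector space `X`.  The fields record
the right `B`-action, the `B`-valued inner product, and their standard axioms,
including positivity of inner products and compatibility of the norm. -/
structure HilbertModule (B : Type u) (X : Type u)
    [NonUnitalCStarAlgebra B] [NormedAddCommGroup X] [NormedSpace ℂ X] [CompleteSpace X] :
    Type u where
  smulR : X → B → X
  inner : X → X → B
  smulR_add : ∀ (x : X) (b c : B), smulR x (b + c) = smulR x b + smulR x c
  add_smulR : ∀ (x y : X) (b : B), smulR (x + y) b = smulR x b + smulR y b
  smulR_mul : ∀ (x : X) (b c : B), smulR x (b * c) = smulR (smulR x b) c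
  smulC_smulR : ∀ (c : ℂ) (x : X) (b : B), smulR (c • x) b = c • smulR x b
  inner_add_left : ∀ x y z : X, inner (x + y) z = inner x z + inner y z
  inner_add_right : ∀ x y z : X, inner x (y + z) = inner x y + inner x z
  inner_smulR_right : ∀ (x y : X) (b : B), inner x (smulR y b) = inner x y * b
  inner_smulC_right : ∀ (c : ℂ) (x y : X), inner x (c • y) = c • inner x y
  star_inner : ∀ x y : X, star (inner x y) = inner y x
  inner_self_pos : ∀ x : X, ∃ b : B, inner x x = star b * b
  norm_inner_self : ∀ x : X, ‖x‖ ^ 2 = ‖inner x x‖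

/-- `T : X → Y` and `S : Y → X` are mutually adjoint operators between
right Hilbert `B`-modules. -/
def HilbertModule.IsAdjointPair {B X Y : Type u} [NonUnitalCStarAlgebra B]
    [NormedAddCommGroup X] [NormedSpace ℂ X] [CompleteSpace X]
    [NormedAddCommGroup Y] [NormedSpace ℂ Y] [CompleteSpace Y]
    (hX : HilbertModule B X) (hY : HilbertModule B Y)
    (T : X → Y) (S : Y → X) : Prop :=
  ∀ (x : X) (y : Y), hY.inner (T x) y = hX.inner x (S y)

/-- Positivity in a C*-algebra, expressed as being of the form `star c * c`. -/
def IsPositiveElem {B : Type u} [NonUnitalCStarAlgebra B] (b : B) : Prop :=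
  ∃ c : B, b = star c * c

/-- Positivity of a matrix over a C*-algebra. -/
def MatrixIsPositive {A : Type u} [NonUnitalCStarAlgebra A] {n : ℕ}
    (M : Matrix (Fin n) (Fin n) A) : Prop :=
  ∃ N : Matrix (Fin n) (Fin n) A, M = N.conjTranspose * N

/-- A sequential (the algebras in question are separable) approximate unit. -/
structure IsApproxUnit {A : Type u} [NonUnitalCStarAlgebra A] (e : ℕ → A) : Prop where
  pos : ∀ n, IsPositiveElem (e n)
  norm_le_one : ∀ n, ‖e n‖ ≤ 1
  tendsto_mul_left : ∀ a : A, Tendsto (fun n => e n * a) atTop (𝓝 a)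
  tendsto_mul_right : ∀ a : A, Tendsto (fun n => a * e n) atTop (𝓝 a)

/-- A completely positive map between C*-algebras: a linear map sending positive
matrices to positive matrices at every matrix level. -/
structure IsCPMap {A B : Type u} [NonUnitalCStarAlgebra A] [NonUnitalCStarAlgebra B]
    (ρ : A → B) : Prop where
  map_add : ∀ a a', ρ (a + a') = ρ a + ρ a'
  map_smul : ∀ (c : ℂ) (a : A), ρ (c • a) = c • ρ a
  map_pos_matrix : ∀ (n : ℕ) (M : Matrix (Fin n) (Fin n) A),
    MatrixIsPositive M → MatrixIsPositive (M.map ρ)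

/-- A map between C*-algebras is strict if some approximate unit of the domain is
sent to a strictly Cauchy net in the multiplier algebra of the codomain. -/
def IsStrictMap {A B : Type u} [NonUnitalCStarAlgebra A] [NonUnitalCStarAlgebra B]
    (ρ : A → B) : Prop :=
  ∃ e : ℕ → A, IsApproxUnit e ∧
    ∀ b : B, CauchySeq (fun n => ρ (e n) * b) ∧ CauchySeq (fun n => b * ρ (e n))

/-- A completely positive map from `A` into the adjointable operators on a
right Hilbert `B`-module `X`. -/
structure IsCPAction {A B X : Type u} [NonUnitalCStarAlgebra A] [NonUnitalCStarAlgebra B]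
    [NormedAddCommGroup X] [NormedSpace ℂ X] [CompleteSpace X]
    (hX : HilbertModule B X) (ρ : A → X → X) : Prop where
  map_add : ∀ a a' x, ρ (a + a') x = ρ a x + ρ a' x
  map_smul : ∀ (c : ℂ) (a : A) x, ρ (c • a) x = c • ρ a x
  add_right : ∀ a x y, ρ a (x + y) = ρ a x + ρ a y
  adjointable : ∀ a, ∃ S, HilbertModule.IsAdjointPair hX hX (ρ a) S
  pos : ∀ (n : ℕ) (M : Matrix (Fin n) (Fin n) A), MatrixIsPositive M →
    ∀ x : Fin n → X, IsPositiveElem (∑ i, ∑ j, hX.inner (x i) (ρ (M i j) (x j)))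

/-- Strictness for a completely positive map into the adjointable operators on a
Hilbert module: some approximate unit is mapped to a strictly Cauchy net. -/
def IsStrictAction {A B X : Type u} [NonUnitalCStarAlgebra A] [NonUnitalCStarAlgebra B]
    [NormedAddCommGroup X] [NormedSpace ℂ X] [CompleteSpace X]
    (hX : HilbertModule B X) (ρ : A → X → X) : Prop :=
  ∃ e : ℕ → A, IsApproxUnit e ∧ ∃ S : ℕ → X → X,
    (∀ n, HilbertModule.IsAdjointPair hX hX (ρ (e n)) (S n)) ∧
    ∀ x, CauchySeq (fun n => ρ (e n) x) ∧ CauchySeq (fun n => S n x)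

/-- A left action of `A` on a Hilbert `B`-module by adjointable operators via a
*-homomorphism, i.e. the structure of an `A`–`B`-correspondence. -/
structure IsCorrespondenceAction {A B X : Type u} [NonUnitalCStarAlgebra A]
    [NonUnitalCStarAlgebra B]
    [NormedAddCommGroup X] [NormedSpace ℂ X] [CompleteSpace X]
    (hX : HilbertModule B X) (φ : A → X → X) : Prop where
  map_add : ∀ a a' x, φ (a + a') x = φ a x + φ a' x
  map_mul : ∀ a a' x, φ (a * a') x = φ a (φ a' x)
  map_smul : ∀ (c : ℂ) (a : A) x, φ (c • a) x = c • φ a x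
  add_right : ∀ a x y, φ a (x + y) = φ a x + φ a y
  star_adjoint : ∀ a, HilbertModule.IsAdjointPair hX hX (φ a) (φ (star a))

/-- The trivial right Hilbert `B`-module structure on `B` itself. -/
def trivHM (B : Type u) [NonUnitalCStarAlgebra B] : HilbertModule B B where
  smulR b c := b * c
  inner b c := star b * c
  smulR_add := by intros; simp [mul_add]
  add_smulR := by intros; simp [add_mul]
  smulR_mul := by intros; simp [mul_assoc]
  smulC_smulR := by intros; simp [smul_mul_assoc]
  inner_add_left := by intros; simp [star_add, add_mul]
  inner_add_right := by intros; simp [mul_add]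
  inner_smulR_right := by intros; simp [mul_assoc]
  inner_smulC_right := by intros; simp [mul_smul_comm]
  star_inner := by intros; simp [star_mul, mul_assoc]
  inner_self_pos := fun b => ⟨b, rfl⟩
  norm_inner_self := by intro b; rw [CStarRing.norm_star_mul_self, pow_two]

/-- `T` is "compact relative to the projection/identification `Q`": it can be
approximated in operator norm by finite sums of rank-one operators
`θ_{u,v} : z ↦ u⟨v, z⟩` with vectors in the image of `Q`.  With `Q = id` this
says `T ∈ K(X)`. -/
def IsCptOn {B X : Type u} [NonUnitalCStarAlgebra B]
    [NormedAddCommGroup X] [NormedSpace ℂ X] [CompleteSpace X]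
    (hX : HilbertModule B X) (Q : X → X) (T : X → X) : Prop :=
  ∀ ε : ℝ, 0 < ε → ∃ (n : ℕ) (u v : Fin n → X), ∀ z : X,
    ‖T (Q z) - ∑ i, hX.smulR (Q (u i)) (hX.inner (Q (v i)) (Q z))‖ ≤ ε * ‖Q z‖

/-- A bi-Hilbertian `A`–`B`-bimodule: a right Hilbert `B`-module `F` with an
additional left `A`-action `actL` and left `A`-valued inner product `innerL`
making it a left Hilbert `A`-module, such that each action is adjointable for
the other inner product and the two norms are equivalent. -/
structure BiHilbertModule (A B F : Type u)
    [NonUnitalCStarAlgebra A] [NonUnitalCStarAlgebra B]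
    [NormedAddCommGroup F] [NormedSpace ℂ F] [CompleteSpace F] : Type u where
  right : HilbertModule B F
  actL : A → F → F
  actL_corr : IsCorrespondenceAction right actL
  innerL : F → F → A
  innerL_add_left : ∀ x y z, innerL (x + y) z = innerL x z + innerL y z
  innerL_add_right : ∀ x y z, innerL x (y + z) = innerL x y + innerL x z
  innerL_actL_left : ∀ (a : A) x y, innerL (actL a x) y = a * innerL x y
  star_innerL : ∀ x y, star (innerL x y) = innerL y x
  innerL_pos : ∀ x, IsPositiveElem (innerL x x)
  -- the right `B`-action is adjointable for the left inner product
  innerL_smulR : ∀ x y (b : B), innerL (right.smulR x b) y = innerL x (right.smulR y (star b))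
  -- the two inner products induce equivalent norms
  norm_equiv : ∃ c : ℝ, 0 < c ∧ ∀ x,
    ‖innerL x x‖ ≤ c * ‖right.inner x x‖ ∧ ‖right.inner x x‖ ≤ c * ‖innerL x x‖

/-!
For a finite family `g` put `K_g = ∑ j, Θ_{g j, g j}`. Cutting finitely many vectors down by the
functional calculus of their own `K` gives contractions `K_g` which act on those vectors as an
approximate unit. Hence for a finite-rank `T = ∑ i, Θ_{u i, v i}` the sum `∑ i, ⟨u i, v i⟩` is the
limit of `∑ i, ⟨K_g (u i), v i⟩ = ∑ j, ⟨g j, T* (g j)⟩`. By Cauchy–Schwarz for the left inner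
product and the index bound applied to the families `g` and `T* g`, the latter has norm at most
`lam * ‖K_g‖ * ‖T‖ ≤ lam * ‖T‖`. So the closure of the graph `{(Θ_{e,f}, ⟨e, f⟩)}` is the graph of a
bounded map `Υ` on the compact operators. Positivity holds since `S* S` is the limit of
`S* K_g S = ∑ j, Θ_{S* (g j), S* (g j)}`; bilinearity passes to the closure, and bilinearity gives
`Υ(T) a = Υ(T a) = Υ(a T) = a Υ(T)` when `T` commutes with the left action.
-/

section CStarAlgebra

open scoped NNReal

attribute [local instance] CStarAlgebra.spectralOrder CStarAlgebra.spectralOrderedRing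

theorem isPositiveElem_iff_nonneg {A : Type u} [NonUnitalCStarAlgebra A] {a : A} :
    IsPositiveElem a ↔ 0 ≤ a :=
  CStarAlgebra.nonneg_iff_eq_star_mul_self.symm

theorem norm_sq_le_norm_mul_norm_of_form_nonneg {A E : Type*} [NonUnitalCStarAlgebra A]
    [PartialOrder A] [StarOrderedRing A] [AddCommGroup E] (s : E →+ E →+ A) (act : A → E → E)
    (hact : ∀ a x y, s (act a x) y = a * s x y) (hstar : ∀ x y, star (s x y) = s y x)
    (hnonneg : ∀ x, 0 ≤ s x x) (x y : E) : ‖s x y‖ ^ 2 ≤ ‖s x x‖ * ‖s y y‖ := by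
  set R := s x y
  have hact' (a : A) (z : E) : s z (act a y) = s z y * star a := by
    rw [← hstar, hact, star_mul, hstar]
  have smul_le (t : ℝ) (ht : ‖s y y‖ < t) : t⁻¹ • (R * star R) ≤ s x x := by
    have ht0 : 0 < t := (norm_nonneg _).trans_lt ht
    have hconj : (t⁻¹ * t⁻¹) • (R * s y y * star R) ≤ t⁻¹ • (R * star R) := calc
      _ ≤ (t⁻¹ * t⁻¹) • (t • (R * star R)) :=
        smul_le_smul_of_nonneg_left
          ((CStarAlgebra.star_right_conjugate_le_norm_smul (.of_nonneg (hnonneg y))).trans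
            (smul_le_smul_of_nonneg_right ht.le (mul_star_self_nonneg R))) (by positivity)
      _ = t⁻¹ • (R * star R) := by rw [smul_smul, inv_mul_cancel_right₀ ht0.ne']
    have hexpand : s (x - act (t⁻¹ • R) y) (x - act (t⁻¹ • R) y) =
        s x x - t⁻¹ • (R * star R) -
          (t⁻¹ • (R * star R) - (t⁻¹ * t⁻¹) • (R * s y y * star R)) := by
      simp only [map_sub, AddMonoidHom.sub_apply, hact, hact', ← hstar x y, star_smul,
        star_trivial, smul_mul_assoc, mul_smul_comm, smul_smul, mul_assoc, R]
    have := add_nonneg (hnonneg (x - act (t⁻¹ • R) y)) (sub_nonneg.2 hconj)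
    rwa [hexpand, sub_add_cancel, sub_nonneg] at this
  have norm_le (t : ℝ) (ht : ‖s y y‖ < t) : ‖R‖ ^ 2 ≤ ‖s x x‖ * t := by
    have ht0 : 0 < t := (norm_nonneg _).trans_lt ht
    have := CStarAlgebra.norm_le_norm_of_nonneg_of_le
      (smul_nonneg (by positivity) (mul_star_self_nonneg R)) (smul_le t ht)
    rwa [norm_smul, CStarRing.norm_self_mul_star, Real.norm_of_nonneg (by positivity),
      inv_mul_le_iff₀ ht0, ← sq, mul_comm] at this
  have hlim : Tendsto (fun t => ‖s x x‖ * t) (𝓝[>] ‖s y y‖) (𝓝 (‖s x x‖ * ‖s y y‖)) :=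
    tendsto_nhdsWithin_of_tendsto_nhds ((continuous_const_mul _).tendsto _)
  exact ge_of_tendsto hlim (eventually_nhdsWithin_of_forall norm_le)

theorem negPart_mul_mul_negPart {E : Type*} [CStarAlgebra E] {T : E} (hT : IsSelfAdjoint T) :
    T⁻ * T * T⁻ = -(T⁻ * T⁻ * T⁻) := by
  conv_lhs => enter [1, 2]; rw [← CFC.posPart_sub_negPart T hT]
  rw [mul_sub, sub_mul, mul_assoc, CFC.posPart_mul_negPart, mul_zero, zero_sub]

theorem exists_conjugate_add_eq_one {E : Type*} [CStarAlgebra E] [PartialOrder E]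
    [StarOrderedRing E] {M : E} (hM : 0 ≤ M) {δ : ℝ} (hδ : 0 < δ) :
    ∃ p r : E, IsSelfAdjoint p ∧ IsSelfAdjoint r ∧ p * M * p + r = 1 ∧
      ‖p * M * p‖ ≤ 1 ∧ ‖r * M * r‖ ≤ δ := by
  -- Take `p = (δ + M)^(-1/2)` and `r = δ (δ + M)⁻¹`.
  lift δ to ℝ≥0 using hδ.le
  have hpos (x : ℝ≥0) : 0 < δ + x := add_pos_of_pos_of_nonneg (mod_cast hδ) zero_le
  let p (x : ℝ≥0) : ℝ≥0 := (NNReal.sqrt (δ + x))⁻¹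
  let r (x : ℝ≥0) : ℝ≥0 := δ * (δ + x)⁻¹
  have hp : Continuous p :=
    .inv₀ (by fun_prop) fun x => (NNReal.sqrt_pos.2 (hpos x)).ne'
  have hr : Continuous r := continuous_const.mul (.inv₀ (by fun_prop) fun x => (hpos x).ne')
  have conj_cfc {f : ℝ≥0 → ℝ≥0} (hf : Continuous f) :
      cfc f M * M * cfc f M = cfc (fun x => f x * x * f x) M := by
    nth_rw 2 [← cfc_id' ℝ≥0 M]
    rw [← cfc_mul f (fun x => x) M, ← cfc_mul (fun x => f x * x) f M]
  have p_conj (x : ℝ≥0) : p x * x * p x = x * (δ + x)⁻¹ := by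
    rw [mul_right_comm, ← mul_inv, NNReal.mul_self_sqrt, mul_comm]
  refine ⟨cfc p M, cfc r M, .of_nonneg (cfc_predicate _ _), .of_nonneg (cfc_predicate _ _),
    ?_, ?_, ?_⟩
  · rw [conj_cfc hp, ← cfc_add .., ← cfc_const_one ℝ≥0 M]
    congr 1 with x
    rw [p_conj, ← add_mul, add_comm x, mul_inv_cancel₀ (hpos x).ne']
  · rw [conj_cfc hp, ← coe_nnnorm, NNReal.coe_le_one]
    refine nnnorm_cfc_nnreal_le fun x _ => ?_
    rw [p_conj]
    exact mul_inv_le_one_of_le₀ (le_add_of_nonneg_left zero_le) zero_le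
  · rw [conj_cfc hr]
    refine nnnorm_cfc_nnreal_le fun x _ => ?_
    have h₁ : δ * (δ + x)⁻¹ ≤ 1 :=
      mul_inv_le_one_of_le₀ (le_add_of_nonneg_right zero_le) zero_le
    have h₂ : (δ + x)⁻¹ * x ≤ 1 := by
      rw [mul_comm]
      exact mul_inv_le_one_of_le₀ (le_add_of_nonneg_left zero_le) zero_le
    calc r x * x * r x = δ * (((δ + x)⁻¹ * x) * (δ * (δ + x)⁻¹)) := by simp only [r]; ring
      _ ≤ δ := mul_le_of_le_one_right' (mul_le_one' h₂ h₁)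

end CStarAlgebra

theorem exists_fin_sum_eq_of_mem_closure_range {α G : Type*} [AddCommGroup G] {f : α → G}
    (hneg : ∀ a, ∃ b, f b = -f a) {x : G} (hx : x ∈ AddSubgroup.closure (Set.range f)) :
    ∃ (n : ℕ) (a : Fin n → α), ∑ i, f (a i) = x := by
  induction hx using AddSubgroup.closure_induction with
  | mem _ h =>
    obtain ⟨a, rfl⟩ := h
    exact ⟨1, fun _ => a, by simp⟩
  | zero => exact ⟨0, Fin.elim0, by simp⟩
  | add _ _ _ _ hx hy =>
    obtain ⟨m, a, rfl⟩ := hx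
    obtain ⟨n, b, rfl⟩ := hy
    exact ⟨m + n, Fin.append a b, by simp [Fin.sum_univ_add]⟩
  | neg _ _ hx =>
    obtain ⟨n, a, rfl⟩ := hx
    choose b hb using hneg
    exact ⟨n, b ∘ a, by simp [hb]⟩

theorem isClosed_image_fst_of_dist_le {α β : Type*} [MetricSpace α] [PseudoMetricSpace β]
    [CompleteSpace α] [CompleteSpace β] {t : Set (α × β)} (ht : IsClosed t) {C : ℝ}
    (h : ∀ p ∈ t, ∀ q ∈ t, dist p.2 q.2 ≤ C * dist p.1 q.1) : IsClosed (Prod.fst '' t) := by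
  have := ht.completeSpace_coe
  have hanti : AntilipschitzWith (max 1 C.toNNReal) fun p : t => p.1.1 :=
    .of_le_mul_dist fun p q => max_le
      (le_mul_of_one_le_left dist_nonneg (mod_cast le_max_left _ _))
      ((h p p.2 q q.2).trans (mul_le_mul_of_nonneg_right
        ((Real.le_coe_toNNReal C).trans (mod_cast le_max_right _ _)) dist_nonneg))
  have hunif : UniformContinuous fun p : t => p.1.1 :=
    uniformContinuous_fst.comp uniformContinuous_subtype_val
  simpa [Set.image_eq_range] using hanti.isClosed_range hunif

namespace HilbertModule

variable {B X : Type u} [NonUnitalCStarAlgebra B] [NormedAddCommGroup X] [NormedSpace ℂ X]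
  [CompleteSpace X] (h : HilbertModule B X)

/-- The inner product, bundled as a biadditive map. -/
def innerHom : X →+ X →+ B :=
  AddMonoidHom.mk' (fun x => AddMonoidHom.mk' (h.inner x) (h.inner_add_right x)) fun x y =>
    AddMonoidHom.ext (h.inner_add_left x y)

theorem inner_sub_left (x y z : X) : h.inner (x - y) z = h.inner x z - h.inner y z :=
  DFunLike.congr_fun (map_sub h.innerHom x y) z

theorem inner_neg_right (x y : X) : h.inner x (-y) = -h.inner x y :=
  map_neg (h.innerHom x) y

theorem inner_smulC_left (c : ℂ) (x y : X) : h.inner (c • x) y = star c • h.inner x y := by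
  rw [← h.star_inner, inner_smulC_right, star_smul, star_inner]

theorem inner_smulR_left (x y : X) (b : B) :
    h.inner (h.smulR x b) y = star b * h.inner x y := by
  rw [← h.star_inner, inner_smulR_right, star_mul, star_inner]

theorem inner_self_eq_zero {x : X} (hx : h.inner x x = 0) : x = 0 := by
  simpa [hx] using h.norm_inner_self x

theorem ext_inner {x y : X} (hxy : ∀ z, h.inner x z = h.inner y z) : x = y :=
  sub_eq_zero.1 <| h.inner_self_eq_zero <| by rw [inner_sub_left, hxy, sub_self]

theorem ext_inner_right {x y : X} (hxy : ∀ z, h.inner z x = h.inner z y) : x = y :=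
  h.ext_inner fun z => by rw [← h.star_inner, hxy, h.star_inner]

section Norm

attribute [local instance] CStarAlgebra.spectralOrder CStarAlgebra.spectralOrderedRing

theorem inner_self_nonneg (x : X) : 0 ≤ h.inner x x :=
  isPositiveElem_iff_nonneg.1 (h.inner_self_pos x)

theorem norm_inner_le (x y : X) : ‖h.inner x y‖ ≤ ‖x‖ * ‖y‖ := by
  have hsq : ‖h.inner x y‖ ^ 2 ≤ ‖h.inner x x‖ * ‖h.inner y y‖ :=
    norm_sq_le_norm_mul_norm_of_form_nonneg h.innerHom (fun b x => h.smulR x (star b))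
      (fun b x y => (h.inner_smulR_left x y (star b)).trans (by rw [star_star]; rfl))
      h.star_inner h.inner_self_nonneg x y
  rw [← h.norm_inner_self, ← h.norm_inner_self, ← mul_pow] at hsq
  exact (sq_le_sq₀ (norm_nonneg _) (by positivity)).1 hsq

end Norm

theorem norm_smulR_le (x : X) (b : B) : ‖h.smulR x b‖ ≤ ‖x‖ * ‖b‖ := by
  refine (sq_le_sq₀ (norm_nonneg _) (by positivity)).1 ?_
  calc ‖h.smulR x b‖ ^ 2 = ‖star b * (h.inner x x * b)‖ := by
        rw [h.norm_inner_self, inner_smulR_left, inner_smulR_right]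
    _ ≤ ‖star b‖ * (‖h.inner x x‖ * ‖b‖) := norm_mul_le_of_le le_rfl (norm_mul_le _ _)
    _ = (‖x‖ * ‖b‖) ^ 2 := by rw [norm_star, ← h.norm_inner_self]; ring

theorem continuous_inner_left (z : X) : Continuous fun w => h.inner w z :=
  AddMonoidHomClass.continuous_of_bound (h.innerHom.flip z) ‖z‖ fun w => by
    rw [mul_comm]; exact h.norm_inner_le w z

theorem continuous_inner_right (z : X) : Continuous fun w => h.inner z w :=
  AddMonoidHomClass.continuous_of_bound (h.innerHom z) ‖z‖ fun w => h.norm_inner_le z w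

variable {h}

namespace IsAdjointPair

variable {T S T' S' : X → X}

theorem symm (hT : IsAdjointPair h h T S) : IsAdjointPair h h S T := fun x y => by
  rw [← h.star_inner, ← hT, h.star_inner]

theorem map_add (hT : IsAdjointPair h h T S) (x y : X) : T (x + y) = T x + T y :=
  h.ext_inner fun z => by rw [h.inner_add_left, hT, hT, hT, h.inner_add_left]

theorem map_smul (hT : IsAdjointPair h h T S) (c : ℂ) (x : X) : T (c • x) = c • T x :=
  h.ext_inner fun z => by rw [h.inner_smulC_left, hT, hT, h.inner_smulC_left]

theorem map_smulR (hT : IsAdjointPair h h T S) (x : X) (b : B) :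
    T (h.smulR x b) = h.smulR (T x) b :=
  h.ext_inner fun z => by rw [h.inner_smulR_left, hT, hT, h.inner_smulR_left]

theorem comp (hT : IsAdjointPair h h T S) (hT' : IsAdjointPair h h T' S') :
    IsAdjointPair h h (fun x => T (T' x)) (fun x => S' (S x)) := fun x y => by
  rw [hT, hT']

theorem eq_of_tendsto (hT : IsAdjointPair h h T S) {ι : Type*} {l : Filter ι} [l.NeBot]
    {u : ι → X} {x y : X} (hu : Tendsto u l (𝓝 x)) (hTu : Tendsto (fun n => T (u n)) l (𝓝 y)) :
    y = T x :=
  h.ext_inner fun z => by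
    rw [hT]
    refine tendsto_nhds_unique (((h.continuous_inner_left z).tendsto y).comp hTu) ?_
    exact (((h.continuous_inner_left (S z)).tendsto x).comp hu).congr fun n => (hT (u n) z).symm

/-- An adjointable map as a continuous linear map; continuity comes from the closed graph
theorem. -/
def toCLM (hT : IsAdjointPair h h T S) : X →L[ℂ] X :=
  ContinuousLinearMap.ofSeqClosedGraph
    (g := { toFun := T, map_add' := hT.map_add, map_smul' := hT.map_smul })
    fun _ _ _ hu hTu => hT.eq_of_tendsto hu hTu

theorem norm_adjoint_le (hT : IsAdjointPair h h T S) {C : ℝ} (hC : 0 ≤ C)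
    (hb : ∀ x, ‖T x‖ ≤ C * ‖x‖) (x : X) : ‖S x‖ ≤ C * ‖x‖ := by
  have hsq : ‖S x‖ * ‖S x‖ ≤ C * ‖x‖ * ‖S x‖ := calc
    ‖S x‖ * ‖S x‖ = ‖h.inner (T (S x)) x‖ := by rw [← sq, h.norm_inner_self, hT]
    _ ≤ C * ‖S x‖ * ‖x‖ := (h.norm_inner_le _ _).trans (by gcongr; exact hb _)
    _ = C * ‖x‖ * ‖S x‖ := by ring
  rcases (norm_nonneg (S x)).eq_or_lt with h0 | h0
  · rw [← h0]; positivity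
  · exact le_of_mul_le_mul_right hsq h0

end IsAdjointPair

variable (h)

/-- The algebra `L(X)` of adjointable operators on a Hilbert module. -/
def adjointable : Subalgebra ℂ (X →L[ℂ] X) where
  carrier := {T | ∃ S, IsAdjointPair h h T S}
  mul_mem' := fun ⟨_, hT⟩ ⟨_, hS⟩ => ⟨_, hT.comp hS⟩
  add_mem' := fun {T T'} ⟨S, hT⟩ ⟨S', hT'⟩ => ⟨fun y => S y + S' y, fun x y => by
    rw [inner_add_right, ← hT, ← hT', ← inner_add_left]; rfl⟩
  algebraMap_mem' c := ⟨fun y => star c • y, fun x y => by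
    rw [inner_smulC_right, ← inner_smulC_left]; rfl⟩

variable {h} in
/-- The adjointable operator given by an adjoint pair of maps. -/
def IsAdjointPair.toAdjointable {T S : X → X} (hT : IsAdjointPair h h T S) : h.adjointable :=
  ⟨hT.toCLM, S, hT⟩

namespace adjointable

variable {h}

@[ext]
theorem ext {T S : h.adjointable} (hTS : ∀ x, T.1 x = S.1 x) : T = S :=
  Subtype.ext (ContinuousLinearMap.ext hTS)

theorem exists_adjoint (T : h.adjointable) : ∃ S : h.adjointable, IsAdjointPair h h T.1 S.1 := by
  obtain ⟨T, S, hT⟩ := T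
  exact ⟨hT.symm.toAdjointable, hT⟩

instance : Star h.adjointable := ⟨fun T => (exists_adjoint T).choose⟩

theorem isAdjointPair_star (T : h.adjointable) : IsAdjointPair h h T.1 (star T).1 :=
  (exists_adjoint T).choose_spec

theorem star_eq_of_isAdjointPair {T S : h.adjointable} (hTS : IsAdjointPair h h T.1 S.1) :
    star T = S :=
  ext fun y => h.ext_inner_right fun x => by rw [← isAdjointPair_star, hTS]

instance : StarRing h.adjointable where
  star_involutive T := star_eq_of_isAdjointPair (isAdjointPair_star T).symm
  star_mul T S := star_eq_of_isAdjointPair <|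
    (isAdjointPair_star T).comp (isAdjointPair_star S)
  star_add T S := star_eq_of_isAdjointPair fun x y => by
    change h.inner (T.1 x + S.1 x) y = h.inner x ((star T).1 y + (star S).1 y)
    rw [inner_add_left, inner_add_right, ← isAdjointPair_star, ← isAdjointPair_star]

instance : StarModule ℂ h.adjointable where
  star_smul c T := star_eq_of_isAdjointPair fun x y => by
    change h.inner (c • T.1 x) y = h.inner x (star c • (star T).1 y)
    rw [inner_smulC_left, inner_smulC_right, ← isAdjointPair_star]

instance : NormedStarGroup h.adjointable where
  norm_star_le T := ContinuousLinearMap.opNorm_le_bound _ (norm_nonneg _) <|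
    (isAdjointPair_star T).norm_adjoint_le (norm_nonneg _) T.1.le_opNorm

theorem norm_apply_sq_le (T : h.adjointable) (x : X) :
    ‖T.1 x‖ ^ 2 ≤ ‖star T * T‖ * ‖x‖ ^ 2 := calc
  ‖T.1 x‖ ^ 2 = ‖h.inner x ((star T * T).1 x)‖ := by
    rw [h.norm_inner_self, isAdjointPair_star T]; rfl
  _ ≤ ‖x‖ * (‖star T * T‖ * ‖x‖) :=
    (h.norm_inner_le _ _).trans (by gcongr; exact (star T * T).1.le_opNorm x)
  _ = ‖star T * T‖ * ‖x‖ ^ 2 := by ring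

instance : CStarRing h.adjointable where
  norm_mul_self_le T := by
    have hle : ‖T‖ ≤ √‖star T * T‖ :=
      ContinuousLinearMap.opNorm_le_bound _ (Real.sqrt_nonneg _) fun x => by
        refine (sq_le_sq₀ (norm_nonneg _) (by positivity)).1 ?_
        rw [mul_pow, Real.sq_sqrt (norm_nonneg (star T * T))]
        exact norm_apply_sq_le T x
    exact (sq ‖T‖).symm.trans_le ((Real.le_sqrt (norm_nonneg T) (norm_nonneg _)).1 hle)

theorem isAdjointPair_of_tendsto {ι : Type*} {l : Filter ι} [l.NeBot] {T : ι → h.adjointable}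
    {T₀ S₀ : X →L[ℂ] X} (hT : Tendsto (fun n => (T n).1) l (𝓝 T₀))
    (hS : Tendsto (fun n => (star (T n)).1) l (𝓝 S₀)) : IsAdjointPair h h T₀ S₀ := fun x y => by
  have tendsto_apply {U : ι → X →L[ℂ] X} {U₀} (hU : Tendsto U l (𝓝 U₀)) (x : X) :
      Tendsto (fun n => U n x) l (𝓝 (U₀ x)) :=
    ((ContinuousLinearMap.apply ℂ X x).continuous.tendsto U₀).comp hU
  refine tendsto_nhds_unique (((h.continuous_inner_left y).tendsto _).comp (tendsto_apply hT x)) ?_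
  refine (((h.continuous_inner_right x).tendsto _).comp (tendsto_apply hS y)).congr fun n => ?_
  exact (isAdjointPair_star (T n) x y).symm

instance : CompleteSpace h.adjointable :=
  Metric.complete_of_cauchySeq_tendsto fun T hT => by
    have hval : UniformContinuous fun T : h.adjointable => T.1 := uniformContinuous_subtype_val
    have hstar : UniformContinuous fun T : h.adjointable => (star T).1 :=
      hval.comp (star_isometry (E := h.adjointable)).uniformContinuous
    obtain ⟨T₀, hT₀⟩ := cauchySeq_tendsto_of_complete (hval.comp_cauchySeq hT)
    obtain ⟨S₀, hS₀⟩ := cauchySeq_tendsto_of_complete (hstar.comp_cauchySeq hT)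
    exact ⟨⟨T₀, S₀, isAdjointPair_of_tendsto hT₀ hS₀⟩, tendsto_subtype_rng.2 hT₀⟩

instance : CStarAlgebra h.adjointable where

end adjointable

section Positivity

attribute [local instance] CStarAlgebra.spectralOrder CStarAlgebra.spectralOrderedRing

variable {h}

-- Apply the hypothesis to `T⁻ z`: since `T⁻ T T⁻ = -(T⁻)³`, this forces `(T⁻)³ = 0`.
theorem adjointable.nonneg_of_forall_inner_nonneg {T : h.adjointable} (hT : IsSelfAdjoint T)
    (hpos : ∀ z, 0 ≤ h.inner z (T.1 z)) : 0 ≤ T := by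
  have hN : 0 ≤ T⁻ := CFC.negPart_nonneg T
  have hNsa : IsSelfAdjoint T⁻ := .of_nonneg hN
  obtain ⟨s, hs⟩ := CStarAlgebra.nonneg_iff_eq_star_mul_self.1 (hNsa.conjugate_nonneg hN)
  have hs0 : s = 0 := by
    ext z
    refine h.inner_self_eq_zero (le_antisymm ?_ (h.inner_self_nonneg _))
    have hinner : h.inner (T⁻.1 z) (T.1 (T⁻.1 z)) = -h.inner (s.1 z) (s.1 z) := calc
      _ = h.inner z ((T⁻ * T * T⁻).1 z) := by
        rw [isAdjointPair_star T⁻, hNsa.star_eq]; rfl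
      _ = h.inner z (-(star s).1 (s.1 z)) := by
        rw [negPart_mul_mul_negPart hT, hs]; rfl
      _ = -h.inner (s.1 z) (s.1 z) := by rw [inner_neg_right, isAdjointPair_star s]
    exact neg_nonneg.1 (hinner ▸ hpos _)
  have hpow : T⁻ ^ 2 ^ 2 = 0 := by
    change T⁻ ^ (3 + 1) = 0
    rw [pow_succ, pow_three', hs, hs0, mul_zero, zero_mul]
  have hnorm : ‖T⁻‖ ^ 2 ^ 2 = 0 := by rw [← hNsa.norm_pow_two_pow, hpow, norm_zero]
  exact (CFC.negPart_eq_zero_iff T hT).1 (norm_eq_zero.1 (pow_eq_zero_iff (by simp) |>.1 hnorm))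

end Positivity

/-- The rank-one operator `Θ_{e,f}`, as an element of the algebra of adjointable operators. -/
def rankOne (e f : X) : h.adjointable :=
  IsAdjointPair.toAdjointable (T := fun z => h.smulR e (h.inner f z))
    (S := fun z => h.smulR f (h.inner e z)) fun x y => by
      rw [inner_smulR_left, inner_smulR_right, star_inner]

theorem rankOne_apply (e f z : X) : (h.rankOne e f).1 z = h.smulR e (h.inner f z) := rfl

theorem star_rankOne (e f : X) : star (h.rankOne e f) = h.rankOne f e :=
  adjointable.star_eq_of_isAdjointPair fun x y => by
    rw [rankOne_apply, rankOne_apply, inner_smulR_left, inner_smulR_right, star_inner]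

theorem mul_rankOne (T : h.adjointable) (e f : X) : T * h.rankOne e f = h.rankOne (T.1 e) f :=
  adjointable.ext fun _ => (adjointable.isAdjointPair_star T).map_smulR e _

theorem rankOne_mul (e f : X) (T : h.adjointable) :
    h.rankOne e f * T = h.rankOne e ((star T).1 f) := by
  rw [← star_star (_ * T), star_mul, star_rankOne, mul_rankOne, star_rankOne]

theorem rankOne_add_left (e e' f : X) : h.rankOne (e + e') f = h.rankOne e f + h.rankOne e' f :=
  adjointable.ext fun _ => h.add_smulR e e' _

theorem rankOne_neg_left (e f : X) : h.rankOne (-e) f = -h.rankOne e f :=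
  map_neg (AddMonoidHom.mk' (h.rankOne · f) fun e e' => h.rankOne_add_left e e' f) e

theorem norm_rankOne_le (e f : X) : ‖h.rankOne e f‖ ≤ ‖e‖ * ‖f‖ :=
  ContinuousLinearMap.opNorm_le_bound _ (by positivity) fun z => by
    rw [mul_assoc]
    exact (h.norm_smulR_le e _).trans (by gcongr; exact h.norm_inner_le f z)

theorem continuous_rankOne_left (f : X) : Continuous fun e => h.rankOne e f :=
  AddMonoidHomClass.continuous_of_bound
    (AddMonoidHom.mk' (h.rankOne · f) fun e e' => h.rankOne_add_left e e' f) ‖f‖ fun e => by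
      rw [mul_comm]; exact h.norm_rankOne_le e f

theorem norm_sq_le_norm_rankOne_self (e : X) : ‖e‖ ^ 2 ≤ ‖h.rankOne e e‖ := by
  have hpow : ‖e‖ ^ 2 * ‖e‖ ^ 2 ≤ ‖h.rankOne e e‖ * ‖e‖ ^ 2 := calc
    ‖e‖ ^ 2 * ‖e‖ ^ 2 = ‖h.inner e ((h.rankOne e e).1 e)‖ := by
      rw [rankOne_apply, inner_smulR_right, h.norm_inner_self]
      nth_rw 3 [← h.star_inner]
      rw [CStarRing.norm_star_mul_self]
    _ ≤ ‖e‖ * (‖h.rankOne e e‖ * ‖e‖) :=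
      (h.norm_inner_le _ _).trans (by gcongr; exact (h.rankOne e e).1.le_opNorm e)
    _ = ‖h.rankOne e e‖ * ‖e‖ ^ 2 := by ring
  rcases (sq_nonneg ‖e‖).eq_or_lt with he | he
  · rw [← he]; positivity
  · exact le_of_mul_le_mul_right hpow he

/-- The positive finite-rank operator `∑ i, Θ_{e i, e i}`. -/
def rankOneSum {ι : Type*} [Fintype ι] (e : ι → X) : h.adjointable :=
  ∑ i, h.rankOne (e i) (e i)

theorem rankOneSum_apply {ι : Type*} [Fintype ι] (e : ι → X) (z : X) :
    (h.rankOneSum e).1 z = ∑ i, h.smulR (e i) (h.inner (e i) z) := by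
  simp [rankOneSum, rankOne_apply]

theorem mul_rankOneSum_mul_star {ι : Type*} [Fintype ι] (T : h.adjointable) (e : ι → X) :
    T * h.rankOneSum e * star T = h.rankOneSum fun i => T.1 (e i) := by
  simp only [rankOneSum, Finset.mul_sum, Finset.sum_mul, mul_rankOne, rankOne_mul, star_star]

section Order

attribute [local instance] CStarAlgebra.spectralOrder CStarAlgebra.spectralOrderedRing

theorem rankOne_self_nonneg (e : X) : 0 ≤ h.rankOne e e :=
  adjointable.nonneg_of_forall_inner_nonneg (h.star_rankOne e e) fun z => by
    rw [rankOne_apply, inner_smulR_right, ← h.star_inner e z]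
    exact star_mul_self_nonneg _

theorem rankOneSum_nonneg {ι : Type*} [Fintype ι] (e : ι → X) : 0 ≤ h.rankOneSum e :=
  Finset.sum_nonneg fun i _ => h.rankOne_self_nonneg (e i)

theorem norm_sq_le_norm_rankOneSum {ι : Type*} [Fintype ι] (e : ι → X) (i : ι) :
    ‖e i‖ ^ 2 ≤ ‖h.rankOneSum e‖ :=
  (h.norm_sq_le_norm_rankOne_self (e i)).trans <|
    CStarAlgebra.norm_le_norm_of_nonneg_of_le (h.rankOne_self_nonneg (e i)) <|
      Finset.single_le_sum (f := fun i => h.rankOne (e i) (e i))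
        (fun j _ => h.rankOne_self_nonneg (e j)) (Finset.mem_univ i)

theorem exists_rankOneSum_norm_sub_le {ι : Type*} [Fintype ι] (e : ι → X) {δ : ℝ} (hδ : 0 < δ) :
    ∃ g : ι → X, ‖h.rankOneSum g‖ ≤ 1 ∧ ∀ i, ‖e i - (h.rankOneSum g).1 (e i)‖ ^ 2 ≤ δ := by
  obtain ⟨p, r, hp, hr, hadd, hone, hδr⟩ := exists_conjugate_add_eq_one (h.rankOneSum_nonneg e) hδ
  have conj_eq {q : h.adjointable} (hq : IsSelfAdjoint q) :
      q * h.rankOneSum e * q = h.rankOneSum fun i => q.1 (e i) := by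
    rw [← mul_rankOneSum_mul_star, hq.star_eq]
  rw [conj_eq hp] at hadd hone
  rw [conj_eq hr] at hδr
  refine ⟨fun i => p.1 (e i), hone, fun i => ?_⟩
  have hsub : e i - (h.rankOneSum fun i => p.1 (e i)).1 (e i) = r.1 (e i) :=
    congr($(sub_eq_of_eq_add' hadd.symm).1 (e i))
  rw [hsub]
  exact (h.norm_sq_le_norm_rankOneSum (fun i => r.1 (e i)) i).trans hδr

end Order

theorem exists_tendsto_rankOneSum {ι : Type*} [Fintype ι] (e : ι → X) :
    ∃ g : ℕ → ι → X, (∀ n, ‖h.rankOneSum (g n)‖ ≤ 1) ∧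
      ∀ i, Tendsto (fun n => (h.rankOneSum (g n)).1 (e i)) atTop (𝓝 (e i)) := by
  choose g hg hle using fun n : ℕ =>
    h.exists_rankOneSum_norm_sub_le e (pow_pos (Nat.one_div_pos_of_nat (α := ℝ) (n := n)) 2)
  refine ⟨g, hg, fun i => tendsto_iff_norm_sub_tendsto_zero.2 ?_⟩
  refine squeeze_zero (fun _ => norm_nonneg _) (fun n => ?_) tendsto_one_div_add_atTop_nhds_zero_nat
  rw [norm_sub_rev]
  exact (sq_le_sq₀ (norm_nonneg _) Nat.one_div_pos_of_nat.le).1 (hle n i)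

/-- The compact operators `K(X)`: the closed span of the rank-one operators. An additive span
suffices, since the rank-one operators are stable under scalar multiplication. -/
def compacts : AddSubgroup h.adjointable :=
  (AddSubgroup.closure (Set.range fun p : X × X => h.rankOne p.1 p.2)).topologicalClosure

theorem sum_rankOne_mem_compacts {ι : Type*} [Fintype ι] (u v : ι → X) :
    ∑ i, h.rankOne (u i) (v i) ∈ h.compacts :=
  subset_closure <| sum_mem fun i _ => AddSubgroup.subset_closure ⟨(u i, v i), rfl⟩

theorem exists_mem_compacts_of_isCptOn {T : X → X} (hT : IsCptOn h id T) :
    ∃ S ∈ h.compacts, ⇑S.1 = T := by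
  choose k u v huv using fun n : ℕ => hT (1 / (n + 1)) Nat.one_div_pos_of_nat
  let S (n : ℕ) : h.adjointable := ∑ i, h.rankOne (u n i) (v n i)
  have apply_dist_le (n : ℕ) (z : X) : ‖T z - (S n).1 z‖ ≤ 1 / (n + 1) * ‖z‖ := by
    simpa [S, rankOne_apply] using huv n z
  have dist_le (m n : ℕ) : dist (S m) (S n) ≤ 1 / (m + 1) + 1 / (n + 1) := by
    rw [dist_eq_norm]
    refine ContinuousLinearMap.opNorm_le_bound _ (by positivity) fun z => ?_
    calc ‖(S m).1 z - (S n).1 z‖ ≤ ‖T z - (S m).1 z‖ + ‖T z - (S n).1 z‖ := by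
          rw [norm_sub_rev (T z)]
          exact norm_sub_le_norm_sub_add_norm_sub ..
      _ ≤ (1 / (m + 1) + 1 / (n + 1)) * ‖z‖ := by
          rw [add_mul]
          exact add_le_add (apply_dist_le m z) (apply_dist_le n z)
  have hcauchy : CauchySeq S := cauchySeq_of_le_tendsto_0 (fun N : ℕ => 2 * (1 / (N + 1) : ℝ))
    (fun m n N hm hn => (dist_le m n).trans <| by
      rw [two_mul]
      exact add_le_add (Nat.one_div_le_one_div hm) (Nat.one_div_le_one_div hn))
    (by simpa using tendsto_one_div_add_atTop_nhds_zero_nat (𝕜 := ℝ) |>.const_mul 2)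
  obtain ⟨S₀, hS₀⟩ := cauchySeq_tendsto_of_complete hcauchy
  refine ⟨S₀, (AddSubgroup.isClosed_topologicalClosure _).mem_of_tendsto hS₀ <|
    .of_forall fun n => h.sum_rankOne_mem_compacts _ _, funext fun z => ?_⟩
  refine tendsto_nhds_unique (f := fun n => (S n).1 z) ?_ ?_ (l := atTop)
  · exact (((ContinuousLinearMap.apply ℂ X z).continuous.comp
      continuous_subtype_val).tendsto S₀).comp hS₀
  · refine tendsto_iff_norm_sub_tendsto_zero.2 (squeeze_zero (fun _ => norm_nonneg _)
      (fun n => (norm_sub_rev _ _).trans_le (apply_dist_le n z)) ?_)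
    simpa using tendsto_one_div_add_atTop_nhds_zero_nat (𝕜 := ℝ) |>.mul_const ‖z‖

theorem exists_sum_rankOne_eq {S : h.adjointable}
    (hS : S ∈ AddSubgroup.closure (Set.range fun p : X × X => h.rankOne p.1 p.2)) :
    ∃ (n : ℕ) (u v : Fin n → X), ∑ i, h.rankOne (u i) (v i) = S := by
  obtain ⟨n, a, rfl⟩ := exists_fin_sum_eq_of_mem_closure_range
    (fun p => ⟨(-p.1, p.2), h.rankOne_neg_left p.1 p.2⟩) hS
  exact ⟨n, fun i => (a i).1, fun i => (a i).2, rfl⟩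

theorem star_mul_self_mem_closure_rankOneSum {T : h.adjointable} (hT : T ∈ h.compacts) :
    star T * T ∈ closure {K | ∃ (n : ℕ) (w : Fin n → X), h.rankOneSum w = K} := by
  have hclosed : IsClosed {T : h.adjointable |
      star T * T ∈ closure {K | ∃ (n : ℕ) (w : Fin n → X), h.rankOneSum w = K}} :=
    isClosed_closure.preimage (by fun_prop)
  refine closure_minimal (fun S hS => ?_) hclosed hT
  obtain ⟨n, u, v, rfl⟩ := h.exists_sum_rankOne_eq hS
  set S := ∑ i, h.rankOne (u i) (v i) with hS_def
  obtain ⟨g, -, hg⟩ := h.exists_tendsto_rankOneSum u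
  have hlim : Tendsto (fun k => h.rankOneSum (g k) * S) atTop (𝓝 S) := by
    simp only [hS_def, Finset.mul_sum, mul_rankOne]
    exact tendsto_finsetSum _ fun i _ => ((h.continuous_rankOne_left (v i)).tendsto _).comp (hg i)
  refine mem_closure_of_tendsto (hlim.const_mul (star S)) (.of_forall fun k => ?_)
  refine ⟨n, fun i => (star S).1 (g k i), ?_⟩
  rw [← mul_rankOneSum_mul_star, star_star, mul_assoc]

end HilbertModule

namespace BiHilbertModule

variable {A B F : Type u} [NonUnitalCStarAlgebra A] [NonUnitalCStarAlgebra B]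
  [NormedAddCommGroup F] [NormedSpace ℂ F] [CompleteSpace F] (bi : BiHilbertModule A B F)

attribute [local instance] CStarAlgebra.spectralOrder CStarAlgebra.spectralOrderedRing

/-- The left inner product, bundled as a biadditive map. -/
def innerLHom : F →+ F →+ A :=
  AddMonoidHom.mk' (fun x => AddMonoidHom.mk' (bi.innerL x) (bi.innerL_add_right x)) fun x y =>
    AddMonoidHom.ext (bi.innerL_add_left x y)

/-- The left inner product `∑ i, ⟨x i, y i⟩` of finite families, bundled as a biadditive map. -/
def sumInnerLHom (ι : Type*) [Fintype ι] : (ι → F) →+ (ι → F) →+ A :=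
  ∑ i, (bi.innerLHom.comp (Pi.evalAddMonoidHom _ i)).compl₂ (Pi.evalAddMonoidHom _ i)

theorem sumInnerLHom_apply {ι : Type*} [Fintype ι] (x y : ι → F) :
    bi.sumInnerLHom ι x y = ∑ i, bi.innerL (x i) (y i) := by
  simp only [sumInnerLHom, AddMonoidHom.finsetSum_apply]
  rfl

theorem innerL_actL_right (a : A) (x y : F) :
    bi.innerL x (bi.actL a y) = bi.innerL x y * star a := by
  rw [← bi.star_innerL, innerL_actL_left, star_mul, star_innerL]

theorem innerL_sum_left {ι : Type*} (s : Finset ι) (f : ι → F) (y : F) :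
    bi.innerL (∑ i ∈ s, f i) y = ∑ i ∈ s, bi.innerL (f i) y :=
  map_sum (bi.innerLHom.flip y) f s

theorem innerL_sum_right {ι : Type*} (s : Finset ι) (x : F) (f : ι → F) :
    bi.innerL x (∑ i ∈ s, f i) = ∑ i ∈ s, bi.innerL x (f i) :=
  map_sum (bi.innerLHom x) f s

theorem sum_innerL_self_nonneg {ι : Type*} [Fintype ι] (x : ι → F) :
    0 ≤ ∑ i, bi.innerL (x i) (x i) :=
  Finset.sum_nonneg fun i _ => isPositiveElem_iff_nonneg.1 (bi.innerL_pos (x i))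

theorem norm_sum_innerL_sq_le {ι : Type*} [Fintype ι] (x y : ι → F) :
    ‖∑ i, bi.innerL (x i) (y i)‖ ^ 2 ≤
      ‖∑ i, bi.innerL (x i) (x i)‖ * ‖∑ i, bi.innerL (y i) (y i)‖ := by
  simpa only [sumInnerLHom_apply] using
    norm_sq_le_norm_mul_norm_of_form_nonneg (bi.sumInnerLHom ι) (fun a x i => bi.actL a (x i))
      (fun a x y => by simp only [sumInnerLHom_apply, innerL_actL_left, Finset.mul_sum])
      (fun x y => by simp only [sumInnerLHom_apply, star_sum, star_innerL])
      (fun x => by rw [sumInnerLHom_apply]; exact bi.sum_innerL_self_nonneg x) x y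

theorem continuous_innerL_left (y : F) : Continuous fun x => bi.innerL x y := by
  obtain ⟨c, hc, hequiv⟩ := bi.norm_equiv
  refine AddMonoidHomClass.continuous_of_bound
    (bi.innerLHom.flip y) √(c * ‖bi.innerL y y‖) fun x =>
      (sq_le_sq₀ (norm_nonneg _) (by positivity)).1 ?_
  calc ‖bi.innerL x y‖ ^ 2 ≤ ‖bi.innerL x x‖ * ‖bi.innerL y y‖ := by
        simpa using bi.norm_sum_innerL_sq_le (fun _ : Unit => x) fun _ => y
    _ ≤ c * ‖x‖ ^ 2 * ‖bi.innerL y y‖ := by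
        rw [bi.right.norm_inner_self]
        exact mul_le_mul_of_nonneg_right (hequiv x).1 (norm_nonneg _)
    _ = (√(c * ‖bi.innerL y y‖) * ‖x‖) ^ 2 := by
        rw [mul_pow, Real.sq_sqrt (by positivity)]
        ring

/-- The left action of `a`, as an adjointable operator for the right inner product. -/
def leftMul (a : A) : bi.right.adjointable := (bi.actL_corr.star_adjoint a).toAdjointable

theorem leftMul_apply (a : A) (x : F) : (bi.leftMul a).1 x = bi.actL a x := rfl

theorem star_leftMul (a : A) : star (bi.leftMul a) = bi.leftMul (star a) :=
  HilbertModule.adjointable.star_eq_of_isAdjointPair (bi.actL_corr.star_adjoint a)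

theorem innerL_rankOneSum_apply {ι : Type*} [Fintype ι] (g : ι → F) (u v : F) :
    bi.innerL ((bi.right.rankOneSum g).1 u) v =
      ∑ j, bi.innerL (g j) ((bi.right.rankOne v u).1 (g j)) := by
  simp only [HilbertModule.rankOneSum_apply, HilbertModule.rankOne_apply, innerL_sum_left,
    innerL_smulR, bi.right.star_inner]

theorem sum_innerL_rankOneSum_apply {ι κ : Type*} [Fintype ι] [Fintype κ] (g : κ → F)
    (u v : ι → F) :
    ∑ i, bi.innerL ((bi.right.rankOneSum g).1 (u i)) (v i) =
      ∑ j, bi.innerL (g j) ((star (∑ i, bi.right.rankOne (u i) (v i))).1 (g j)) := by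
  simp only [innerL_rankOneSum_apply, star_sum, HilbertModule.star_rankOne,
    AddSubmonoidClass.coe_finsetSum, sum_apply, innerL_sum_right]
  exact Finset.sum_comm

/-- The right numerical index of a bi-Hilbertian bimodule is at most `lam`. -/
def HasRightIndexLE (lam : ℝ) : Prop :=
  ∀ (n : ℕ) (f : Fin n → F) (C : ℝ),
    (∀ z : F, ‖∑ i, bi.right.smulR (f i) (bi.right.inner (f i) z)‖ ≤ C * ‖z‖) →
    ‖∑ i, bi.innerL (f i) (f i)‖ ≤ lam * C

/-- The graph of `Υ`: the closed additive subgroup of `L(F) × A` generated by the pairs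
`(Θ_{e,f}, ⟨e, f⟩)`. -/
def upsilonGraph : AddSubgroup (bi.right.adjointable × A) :=
  (AddSubgroup.closure
    (Set.range fun p : F × F => (bi.right.rankOne p.1 p.2, bi.innerL p.1 p.2))).topologicalClosure

/-- The map `Υ : K(F) → A`, with junk values at maps which are not compact operators. -/
def upsilon (T : F → F) : A :=
  Classical.epsilon fun a => ∃ S : bi.right.adjointable, ⇑S.1 = T ∧ (S, a) ∈ bi.upsilonGraph

variable {bi} {lam : ℝ}

namespace HasRightIndexLE

theorem nonneg (hidx : bi.HasRightIndexLE lam) : 0 ≤ lam := by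
  simpa using hidx 0 Fin.elim0 1 (by simp)

theorem norm_sum_innerL_self_le (hidx : bi.HasRightIndexLE lam) {n : ℕ} (f : Fin n → F) :
    ‖∑ i, bi.innerL (f i) (f i)‖ ≤ lam * ‖bi.right.rankOneSum f‖ :=
  hidx n f _ fun z => by
    rw [← HilbertModule.rankOneSum_apply]
    exact (bi.right.rankOneSum f).1.le_opNorm z

theorem norm_sum_innerL_apply_le (hidx : bi.HasRightIndexLE lam) {n : ℕ} (g : Fin n → F)
    (T : bi.right.adjointable) :
    ‖∑ j, bi.innerL (g j) (T.1 (g j))‖ ≤ lam * ‖bi.right.rankOneSum g‖ * ‖T‖ := by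
  have hlam := hidx.nonneg
  refine (sq_le_sq₀ (norm_nonneg _) (by positivity)).1 ?_
  calc ‖∑ j, bi.innerL (g j) (T.1 (g j))‖ ^ 2
      ≤ ‖∑ j, bi.innerL (g j) (g j)‖ * ‖∑ j, bi.innerL (T.1 (g j)) (T.1 (g j))‖ :=
        bi.norm_sum_innerL_sq_le g _
    _ ≤ (lam * ‖bi.right.rankOneSum g‖) * (lam * ‖T * bi.right.rankOneSum g * star T‖) := by
        rw [HilbertModule.mul_rankOneSum_mul_star]
        gcongr
        exacts [hidx.norm_sum_innerL_self_le g, hidx.norm_sum_innerL_self_le _]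
    _ ≤ (lam * ‖bi.right.rankOneSum g‖) * (lam * (‖T‖ * ‖bi.right.rankOneSum g‖ * ‖T‖)) := by
        gcongr
        exact norm_mul_le_of_le (norm_mul_le _ _) (norm_star T).le
    _ = (lam * ‖bi.right.rankOneSum g‖ * ‖T‖) ^ 2 := by ring

theorem norm_sum_innerL_le (hidx : bi.HasRightIndexLE lam) {n : ℕ} (u v : Fin n → F) :
    ‖∑ i, bi.innerL (u i) (v i)‖ ≤ lam * ‖∑ i, bi.right.rankOne (u i) (v i)‖ := by
  obtain ⟨g, hg, hlim⟩ := bi.right.exists_tendsto_rankOneSum u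
  refine le_of_tendsto (f := fun k => ‖∑ i, bi.innerL ((bi.right.rankOneSum (g k)).1 (u i)) (v i)‖)
    (tendsto_finsetSum _ fun i _ =>
      ((bi.continuous_innerL_left (v i)).tendsto _).comp (hlim i)).norm (.of_forall fun k => ?_)
  have hlam := hidx.nonneg
  calc ‖∑ i, bi.innerL ((bi.right.rankOneSum (g k)).1 (u i)) (v i)‖
      ≤ lam * ‖bi.right.rankOneSum (g k)‖ * ‖star (∑ i, bi.right.rankOne (u i) (v i))‖ := by
        rw [sum_innerL_rankOneSum_apply]
        exact hidx.norm_sum_innerL_apply_le (g k) _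
    _ ≤ lam * 1 * ‖∑ i, bi.right.rankOne (u i) (v i)‖ := by
        rw [norm_star]
        gcongr
        exact hg k
    _ = lam * ‖∑ i, bi.right.rankOne (u i) (v i)‖ := by rw [mul_one]

end HasRightIndexLE

theorem rankOne_mem_upsilonGraph (e f : F) :
    (bi.right.rankOne e f, bi.innerL e f) ∈ bi.upsilonGraph :=
  subset_closure (AddSubgroup.subset_closure ⟨(e, f), rfl⟩)

theorem sum_mem_upsilonGraph {ι : Type*} [Fintype ι] (u v : ι → F) :
    (∑ i, bi.right.rankOne (u i) (v i), ∑ i, bi.innerL (u i) (v i)) ∈ bi.upsilonGraph := by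
  rw [prod_mk_sum]
  exact sum_mem fun i _ => rankOne_mem_upsilonGraph (u i) (v i)

theorem map_mem_upsilonGraph (φ : bi.right.adjointable × A →+ bi.right.adjointable × A)
    (hφ : Continuous φ)
    (hgen : ∀ e f : F, φ (bi.right.rankOne e f, bi.innerL e f) ∈ bi.upsilonGraph)
    {p : bi.right.adjointable × A} (hp : p ∈ bi.upsilonGraph) : φ p ∈ bi.upsilonGraph := by
  have hle : bi.upsilonGraph ≤ bi.upsilonGraph.comap φ :=
    AddSubgroup.topologicalClosure_minimal _
      ((AddSubgroup.closure_le _).2 (Set.range_subset_iff.2 fun p => hgen p.1 p.2))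
      ((AddSubgroup.isClosed_topologicalClosure _).preimage hφ)
  exact hle hp

theorem leftMul_mul_mem_upsilonGraph (a : A) {p : bi.right.adjointable × A}
    (hp : p ∈ bi.upsilonGraph) : (bi.leftMul a, a) * p ∈ bi.upsilonGraph :=
  map_mem_upsilonGraph (AddMonoidHom.mulLeft (bi.leftMul a, a)) (continuous_const_mul _)
    (fun e f => by
      simpa [HilbertModule.mul_rankOne, innerL_actL_left, leftMul_apply] using
        rankOne_mem_upsilonGraph (bi := bi) (bi.actL a e) f) hp

theorem mul_leftMul_mem_upsilonGraph (a : A) {p : bi.right.adjointable × A}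
    (hp : p ∈ bi.upsilonGraph) : p * (bi.leftMul a, a) ∈ bi.upsilonGraph :=
  map_mem_upsilonGraph (AddMonoidHom.mulRight (bi.leftMul a, a)) (continuous_mul_const _)
    (fun e f => by
      simpa [HilbertModule.rankOne_mul, innerL_actL_right, star_leftMul, leftMul_apply] using
        rankOne_mem_upsilonGraph (bi := bi) e (bi.actL (star a) f)) hp

namespace HasRightIndexLE

theorem norm_snd_le (hidx : bi.HasRightIndexLE lam) {p : bi.right.adjointable × A}
    (hp : p ∈ bi.upsilonGraph) : ‖p.2‖ ≤ lam * ‖p.1‖ := by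
  have hclosed : IsClosed {p : bi.right.adjointable × A | ‖p.2‖ ≤ lam * ‖p.1‖} :=
    isClosed_le (by fun_prop) (by fun_prop)
  refine closure_minimal (fun q hq => ?_) hclosed hp
  obtain ⟨n, a, rfl⟩ := exists_fin_sum_eq_of_mem_closure_range (fun p => ⟨(-p.1, p.2),
    Prod.ext (bi.right.rankOne_neg_left p.1 p.2) (map_neg (bi.innerLHom.flip p.2) p.1)⟩) hq
  simpa only [Set.mem_ofPred_eq, Prod.fst_sum, Prod.snd_sum] using
    hidx.norm_sum_innerL_le (fun i => (a i).1) fun i => (a i).2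

theorem isClosed_image_fst (hidx : bi.HasRightIndexLE lam) {t : Set (bi.right.adjointable × A)}
    (ht : IsClosed t) (hsub : t ⊆ bi.upsilonGraph) : IsClosed (Prod.fst '' t) :=
  isClosed_image_fst_of_dist_le ht (C := lam) fun p hp q hq => by
    rw [dist_eq_norm, dist_eq_norm]
    exact hidx.norm_snd_le (sub_mem (hsub hp) (hsub hq))

theorem exists_mem_upsilonGraph (hidx : bi.HasRightIndexLE lam) {S : bi.right.adjointable}
    (hS : S ∈ bi.right.compacts) : ∃ a, (S, a) ∈ bi.upsilonGraph := by
  have hclosed := hidx.isClosed_image_fst (AddSubgroup.isClosed_topologicalClosure _) subset_rfl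
  suffices S ∈ Prod.fst '' (bi.upsilonGraph : Set (bi.right.adjointable × A)) by simpa using this
  refine closure_minimal (fun S hS => ?_) hclosed hS
  obtain ⟨n, u, v, rfl⟩ := bi.right.exists_sum_rankOne_eq hS
  exact ⟨_, sum_mem_upsilonGraph u v, rfl⟩

theorem exists_star_mul_self_mem_upsilonGraph (hidx : bi.HasRightIndexLE lam)
    {S : bi.right.adjointable} (hS : S ∈ bi.right.compacts) :
    ∃ a, 0 ≤ a ∧ (star S * S, a) ∈ bi.upsilonGraph := by
  have hclosed := hidx.isClosed_image_fst
    ((AddSubgroup.isClosed_topologicalClosure _).inter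
      ((CStarAlgebra.isClosed_nonneg (A := A)).preimage continuous_snd))
    (Set.inter_subset_left (s := (bi.upsilonGraph : Set (bi.right.adjointable × A))))
  obtain ⟨p, ⟨hp, hp0⟩, hpS⟩ := closure_minimal
    (by
      rintro _ ⟨n, w, rfl⟩
      exact ⟨_, ⟨sum_mem_upsilonGraph w w, bi.sum_innerL_self_nonneg w⟩, rfl⟩)
    hclosed (bi.right.star_mul_self_mem_closure_rankOneSum hS)
  exact ⟨p.2, hp0, hpS ▸ hp⟩

theorem upsilon_eq (hidx : bi.HasRightIndexLE lam) {S : bi.right.adjointable} {a : A}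
    (ha : (S, a) ∈ bi.upsilonGraph) : bi.upsilon S.1 = a := by
  obtain ⟨S', hS', hmem⟩ := Classical.epsilon_spec
    (p := fun a => ∃ S' : bi.right.adjointable, ⇑S'.1 = S.1 ∧ (S', a) ∈ bi.upsilonGraph)
    ⟨a, S, rfl, ha⟩
  obtain rfl : S' = S := HilbertModule.adjointable.ext (congrFun hS')
  have hnorm := hidx.norm_snd_le (sub_mem hmem ha)
  simp only [Prod.fst_sub, Prod.snd_sub, sub_self, norm_zero, mul_zero, norm_le_zero_iff] at hnorm
  exact sub_eq_zero.1 hnorm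

theorem exists_adjointable_of_isCptOn (hidx : bi.HasRightIndexLE lam) {T : F → F}
    (hT : IsCptOn bi.right id T) :
    ∃ S ∈ bi.right.compacts, ⇑S.1 = T ∧ (S, bi.upsilon T) ∈ bi.upsilonGraph := by
  obtain ⟨S, hS, rfl⟩ := bi.right.exists_mem_compacts_of_isCptOn hT
  obtain ⟨a, ha⟩ := hidx.exists_mem_upsilonGraph hS
  exact ⟨S, hS, rfl, hidx.upsilon_eq ha ▸ ha⟩

theorem upsilon_rankOne (hidx : bi.HasRightIndexLE lam) (e f : F) :
    bi.upsilon (fun z => bi.right.smulR e (bi.right.inner f z)) = bi.innerL e f :=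
  hidx.upsilon_eq (rankOne_mem_upsilonGraph e f)

theorem upsilon_add (hidx : bi.HasRightIndexLE lam) {T S : F → F}
    (hT : IsCptOn bi.right id T) (hS : IsCptOn bi.right id S) :
    bi.upsilon (fun z => T z + S z) = bi.upsilon T + bi.upsilon S := by
  obtain ⟨T, -, rfl, hTmem⟩ := hidx.exists_adjointable_of_isCptOn hT
  obtain ⟨S, -, rfl, hSmem⟩ := hidx.exists_adjointable_of_isCptOn hS
  exact hidx.upsilon_eq (add_mem hTmem hSmem)

theorem norm_upsilon_le (hidx : bi.HasRightIndexLE lam) {T : F → F} {C : ℝ}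
    (hT : IsCptOn bi.right id T) (hC : ∀ z, ‖T z‖ ≤ C * ‖z‖) : ‖bi.upsilon T‖ ≤ lam * C := by
  have hlamC : 0 ≤ lam * C := by
    simpa using hidx 0 Fin.elim0 C fun z => by simpa using (norm_nonneg _).trans (hC z)
  obtain ⟨S, -, rfl, hmem⟩ := hidx.exists_adjointable_of_isCptOn hT
  have hS : ‖S‖ ≤ max C 0 := ContinuousLinearMap.opNorm_le_bound _ (le_max_right _ _) fun z =>
    (hC z).trans (by gcongr; exact le_max_left _ _)
  calc ‖bi.upsilon S.1‖ ≤ lam * ‖S‖ := hidx.norm_snd_le hmem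
    _ ≤ lam * max C 0 := mul_le_mul_of_nonneg_left hS hidx.nonneg
    _ = lam * C := by rw [mul_max_of_nonneg _ _ hidx.nonneg, mul_zero, max_eq_left hlamC]

theorem isPositiveElem_upsilon (hidx : bi.HasRightIndexLE lam) {T T' : F → F}
    (hT : IsCptOn bi.right id T) (hadj : HilbertModule.IsAdjointPair bi.right bi.right T T') :
    IsPositiveElem (bi.upsilon fun z => T' (T z)) := by
  obtain ⟨S, hS, rfl⟩ := bi.right.exists_mem_compacts_of_isCptOn hT
  obtain rfl : T' = (star S).1 := funext fun y => bi.right.ext_inner_right fun x => by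
    rw [← hadj, ← HilbertModule.adjointable.isAdjointPair_star]
  obtain ⟨a, ha, hmem⟩ := hidx.exists_star_mul_self_mem_upsilonGraph hS
  exact isPositiveElem_iff_nonneg.2 ((hidx.upsilon_eq hmem).symm ▸ ha)

theorem upsilon_actL_left (hidx : bi.HasRightIndexLE lam) (a : A) {T : F → F}
    (hT : IsCptOn bi.right id T) :
    bi.upsilon (fun z => bi.actL a (T z)) = a * bi.upsilon T := by
  obtain ⟨S, -, rfl, hmem⟩ := hidx.exists_adjointable_of_isCptOn hT
  exact hidx.upsilon_eq (leftMul_mul_mem_upsilonGraph a hmem)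

theorem upsilon_actL_right (hidx : bi.HasRightIndexLE lam) (a : A) {T : F → F}
    (hT : IsCptOn bi.right id T) :
    bi.upsilon (fun z => T (bi.actL a z)) = bi.upsilon T * a := by
  obtain ⟨S, -, rfl, hmem⟩ := hidx.exists_adjointable_of_isCptOn hT
  exact hidx.upsilon_eq (mul_leftMul_mem_upsilonGraph a hmem)

theorem upsilon_mul_comm (hidx : bi.HasRightIndexLE lam) {T : F → F}
    (hT : IsCptOn bi.right id T) (hcomm : ∀ a x, T (bi.actL a x) = bi.actL a (T x)) (a : A) :
    bi.upsilon T * a = a * bi.upsilon T := by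
  rw [← hidx.upsilon_actL_right a hT, ← hidx.upsilon_actL_left a hT]
  simp only [hcomm]

end HasRightIndexLE

end BiHilbertModule

/-- Let `X` be a bi-Hilbertian `A`–`B`-bimodule with finite
right numerical index `λ`, i.e. `‖Σᵢ {}_A⟨fᵢ, fᵢ⟩‖ ≤ λ ‖Σᵢ Θ_{fᵢ,fᵢ}‖` for all
finite families `(fᵢ)`.  Then `Υ(Θ_{e,f}) = {}_A⟨e, f⟩` extends to an
`A`-bilinear positive map `Υ : K(X_B) → A`, and for any compact `T` commuting
with the left `A`-action, `Υ(T)` lies in the centre of `M(A)` (it commutes with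
every element of `A`). -/
theorem upsilon_extends {A B F : Type u}
    [NonUnitalCStarAlgebra A] [NonUnitalCStarAlgebra B]
    [NormedAddCommGroup F] [NormedSpace ℂ F] [CompleteSpace F]
    (bi : BiHilbertModule A B F) (lam : ℝ) (hlam : 0 ≤ lam)
    -- finite right numerical index `λ`
    (hnum : ∀ (n : ℕ) (f : Fin n → F) (C : ℝ),
      (∀ z : F, ‖∑ i, bi.right.smulR (f i) (bi.right.inner (f i) z)‖ ≤ C * ‖z‖) →
      ‖∑ i, bi.innerL (f i) (f i)‖ ≤ lam * C) :
    ∃ Υ : (F → F) → A,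
      -- `Υ(Θ_{e,f}) = {}_A⟨e, f⟩`
      (∀ e f : F, Υ (fun z => bi.right.smulR e (bi.right.inner f z)) = bi.innerL e f) ∧
      -- additive on compact operators
      (∀ T S : F → F, IsCptOn bi.right id T → IsCptOn bi.right id S →
        Υ (fun z => T z + S z) = Υ T + Υ S) ∧
      -- bounded with norm at most `λ`
      (∀ (T : F → F) (C : ℝ), IsCptOn bi.right id T → (∀ z, ‖T z‖ ≤ C * ‖z‖) →
        ‖Υ T‖ ≤ lam * C) ∧
      -- positive
      (∀ T T' : F → F, IsCptOn bi.right id T →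
        HilbertModule.IsAdjointPair bi.right bi.right T T' →
        IsPositiveElem (Υ (fun z => T' (T z)))) ∧
      -- `A`-bilinear
      (∀ (a : A) (T : F → F), IsCptOn bi.right id T →
        Υ (fun z => bi.actL a (T z)) = a * Υ T ∧
        Υ (fun z => T (bi.actL a z)) = Υ T * a) ∧
      -- central values on `A`-commuting compacts
      (∀ T : F → F, IsCptOn bi.right id T →
        (∀ (a : A) (x : F), T (bi.actL a x) = bi.actL a (T x)) →
        ∀ a : A, Υ T * a = a * Υ T) := by
  have hidx : bi.HasRightIndexLE lam := hnum
  exact ⟨bi.upsilon, hidx.upsilon_rankOne, fun _ _ => hidx.upsilon_add,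
    fun _ _ => hidx.norm_upsilon_le, fun _ _ => hidx.isPositiveElem_upsilon,
    fun a _ hT => ⟨hidx.upsilon_actL_left a hT, hidx.upsilon_actL_right a hT⟩,
    fun _ => hidx.upsilon_mul_comm⟩
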